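/- (Stationary phase for quadratic phases.) Let φ : ℝ² → ℂ be a smooth compactly supported function. Then there exists a constant c = c(φ) > 0 such that for every real quadratic polynomial f(x, y) = ax² + bxy + cy² + dx + ey + g whose homogeneous quadratic part has discriminant b² − 4ac = −D with D > 0, one has |∫_ℝ∫_ℝ φ(x, y) e(f(x, y)) dx dy| ≤ c / √D. -/

import Mathlib

/-!
The condition `4ac' - b² = D > 0` makes the quadratic part definite. Exchanging `x` and `y` if
necessary, `|a| ≤ |c'|`, so the shear slope `s = b / (2c')` satisfies `|s| ≤ 1`, and translating
`y` by `-s x` diagonalises the phase: up to a constant it becomes `A x² + μ x + c' y² + e y` with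
`A = D / (4c')`, while the amplitude becomes `ψ(x, y) = φ(x, y - s x)`.

In one variable, the primitives of `e(l x² + m x)` are bounded by `4 / √|l|`
(`norm_chirpPrim_le`): a neighbourhood of the stationary point of width `1 / √|l|` is estimated
trivially, the rest by integration by parts. Integrating by parts in `y`, then in `x`, moves both
oscillating factors to their primitives at the cost of replacing `ψ` by `∂ₓ∂ᵧψ`, which is bounded
and compactly supported uniformly in `|s| ≤ 1`. The result is a bound of order
`1 / √(|A| |c'|) = 2 / √D`.
-/

open MeasureTheory

/-- The one-dimensional oscillating factor `e(l x² + m x)`. -/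
noncomputable def chirp (l m x : ℝ) : ℂ :=
  Complex.exp (2 * Real.pi * Complex.I * (l * x ^ 2 + m * x))

/-- The primitive of `chirp l m` vanishing at `0`. -/
noncomputable def chirpPrim (l m x : ℝ) : ℂ := ∫ u in (0 : ℝ)..x, chirp l m u

lemma norm_chirp (l m x : ℝ) : ‖chirp l m x‖ = 1 := by
  have : (2 * Real.pi * Complex.I * (l * x ^ 2 + m * x) : ℂ)
      = ((2 * Real.pi * (l * x ^ 2 + m * x) : ℝ) : ℂ) * Complex.I := by
    push_cast; ring
  rw [chirp, this, Complex.norm_exp_ofReal_mul_I]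

lemma continuous_chirp (l m : ℝ) : Continuous (chirp l m) := by
  unfold chirp; fun_prop

lemma hasDerivAt_chirpPrim (l m x : ℝ) : HasDerivAt (chirpPrim l m) (chirp l m x) x :=
  intervalIntegral.integral_hasDerivAt_right ((continuous_chirp l m).intervalIntegrable _ _)
    (continuous_chirp l m).aestronglyMeasurable.stronglyMeasurableAtFilter
    (continuous_chirp l m).continuousAt

lemma continuous_chirpPrim (l m : ℝ) : Continuous (chirpPrim l m) :=
  continuous_iff_continuousAt.2 fun x => (hasDerivAt_chirpPrim l m x).continuousAt

/-- Away from the stationary point, `chirp l 0` is, up to an integrable error, the derivative of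
`chirp l 0 u / (4 π i l u)`. -/
lemma norm_integral_chirp_away {l δ t : ℝ} (hl : l ≠ 0) (hδ : 0 < δ) (ht : δ ≤ t) :
    ‖∫ u in δ..t, chirp l 0 u‖ ≤ 1 / (|l| * δ) := by
  have hpos : ∀ u ∈ Set.uIcc δ t, 0 < u := by
    intro u hu
    rw [Set.uIcc_of_le ht] at hu
    exact hδ.trans_le hu.1
  set k : ℂ := 4 * Real.pi * Complex.I * l with hk
  have hk0 : k ≠ 0 := by
    simp [hk, hl, Real.pi_ne_zero]
  have hkn : ‖k‖ = 4 * Real.pi * |l| := by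
    simp [hk, abs_of_pos Real.pi_pos]
  have hder : ∀ u ∈ Set.uIcc δ t, HasDerivAt (fun u : ℝ => chirp l 0 u * (k * u)⁻¹)
      (chirp l 0 u - chirp l 0 u * (k * (u : ℂ) ^ 2)⁻¹) u := by
    intro u hu
    have hu0 : (u : ℂ) ≠ 0 := by exact_mod_cast (hpos u hu).ne'
    have hid : HasDerivAt (fun u : ℝ => (u : ℂ)) 1 u := Complex.ofRealCLM.hasDerivAt
    have h1 : HasDerivAt (fun u : ℝ => chirp l 0 u) (chirp l 0 u * (k * u)) u := by
      have := (((hid.pow 2).const_mul (l : ℂ)).add (hid.const_mul ((0 : ℝ) : ℂ))).const_mul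
        (2 * Real.pi * Complex.I : ℂ) |>.cexp
      refine this.congr_deriv ?_
      simp [chirp, hk]
      ring
    have h2 : HasDerivAt (fun u : ℝ => (k * (u : ℂ))⁻¹) (-(k * 1) / (k * u) ^ 2) u :=
      (hid.const_mul k).fun_inv (mul_ne_zero hk0 hu0)
    refine (h1.mul h2).congr_deriv ?_
    field_simp
    ring
  have hc1 : ContinuousOn (fun u : ℝ => chirp l 0 u) (Set.uIcc δ t) :=
    (continuous_chirp l 0).continuousOn
  have hc2 : ContinuousOn (fun u : ℝ => chirp l 0 u * (k * (u : ℂ) ^ 2)⁻¹) (Set.uIcc δ t) := by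
    refine hc1.mul (ContinuousOn.inv₀ (by fun_prop) ?_)
    intro u hu
    have hu0 : (u : ℂ) ≠ 0 := by exact_mod_cast (hpos u hu).ne'
    exact mul_ne_zero hk0 (pow_ne_zero _ hu0)
  have hftc := intervalIntegral.integral_eq_sub_of_hasDerivAt hder
    (hc1.sub hc2).intervalIntegrable
  rw [intervalIntegral.integral_sub hc1.intervalIntegrable hc2.intervalIntegrable,
    sub_eq_iff_eq_add] at hftc
  -- the error term is dominated by the derivative of `-1 / (|k| u)`
  have herr : ‖∫ u in δ..t, chirp l 0 u * (k * (u : ℂ) ^ 2)⁻¹‖ ≤ ‖k‖⁻¹ * (δ⁻¹ - t⁻¹) := by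
    have hci : ContinuousOn (fun u : ℝ => ‖k‖⁻¹ * (u ^ 2)⁻¹) (Set.uIcc δ t) :=
      continuousOn_const.mul (ContinuousOn.inv₀ (by fun_prop)
        fun u hu => pow_ne_zero _ (hpos u hu).ne')
    have hint : ∫ u in δ..t, ‖k‖⁻¹ * (u ^ 2)⁻¹ = ‖k‖⁻¹ * (δ⁻¹ - t⁻¹) := by
      have hd : ∀ u ∈ Set.uIcc δ t,
          HasDerivAt (fun u : ℝ => -(‖k‖⁻¹ * u⁻¹)) (‖k‖⁻¹ * (u ^ 2)⁻¹) u := by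
        intro u hu
        refine ((hasDerivAt_inv (hpos u hu).ne').const_mul _).fun_neg.congr_deriv ?_
        ring
      rw [intervalIntegral.integral_eq_sub_of_hasDerivAt hd hci.intervalIntegrable]
      ring
    rw [← hint]
    refine intervalIntegral.norm_integral_le_of_norm_le ht ?_ hci.intervalIntegrable
    refine Filter.Eventually.of_forall fun u _ => ?_
    rw [norm_mul, norm_chirp, norm_inv, norm_mul, norm_pow, Complex.norm_real, mul_inv,
      Real.norm_eq_abs, sq_abs, one_mul]
  have hbd : ∀ u : ℝ, 0 < u → ‖chirp l 0 u * (k * u)⁻¹‖ = ‖k‖⁻¹ * u⁻¹ := by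
    intro u hu
    rw [norm_mul, norm_chirp, norm_inv, norm_mul, Complex.norm_real, mul_inv,
      Real.norm_eq_abs, abs_of_pos hu, one_mul]
  have ht0 : 0 < t := hδ.trans_le ht
  rw [hftc]
  calc _ ≤ (‖k‖⁻¹ * t⁻¹ + ‖k‖⁻¹ * δ⁻¹) + ‖k‖⁻¹ * (δ⁻¹ - t⁻¹) := by
        refine (norm_add_le _ _).trans (add_le_add ((norm_sub_le _ _).trans ?_) herr)
        rw [hbd t ht0, hbd δ hδ]
    _ = 1 / (|l| * δ) * (1 / (2 * Real.pi)) := by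
        rw [hkn]
        have := abs_pos.2 hl
        have := Real.pi_pos
        field_simp
        ring
    _ ≤ 1 / (|l| * δ) * 1 := by
        have := abs_pos.2 hl
        gcongr
        rw [div_le_one (by positivity)]
        linarith [Real.pi_gt_three]
    _ = _ := mul_one _

lemma norm_chirpPrim_zero_le_of_nonneg {l t : ℝ} (hl : l ≠ 0) (ht : 0 ≤ t) :
    ‖chirpPrim l 0 t‖ ≤ 2 / √|l| := by
  have hs : 0 < √|l| := Real.sqrt_pos.2 (abs_pos.2 hl)
  have htriv : ∀ r : ℝ, 0 ≤ r → ‖∫ u in (0 : ℝ)..r, chirp l 0 u‖ ≤ r := by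
    intro r hr
    have := intervalIntegral.norm_integral_le_of_norm_le_const (a := 0) (b := r)
      (f := chirp l 0) (C := 1) fun u _ => (norm_chirp l 0 u).le
    simpa [abs_of_nonneg hr] using this
  -- the cut-off `1 / √|l|` balances the trivial bound with `norm_integral_chirp_away`
  rcases le_total t (1 / √|l|) with h | h
  · refine (htriv t ht).trans (h.trans ?_)
    gcongr
    norm_num
  · have hi := fun p q => (continuous_chirp l 0).intervalIntegrable (μ := volume) p q
    rw [chirpPrim, ← intervalIntegral.integral_add_adjacent_intervals (hi 0 (1 / √|l|)) (hi _ t)]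
    refine (norm_add_le _ _).trans ((add_le_add (htriv _ (by positivity))
      (norm_integral_chirp_away hl (by positivity) h)).trans_eq ?_)
    have : |l| * (1 / √|l|) = √|l| := by
      rw [mul_one_div, Real.div_sqrt]
    rw [this]
    ring

lemma norm_chirpPrim_zero_le {l : ℝ} (hl : l ≠ 0) (t : ℝ) :
    ‖chirpPrim l 0 t‖ ≤ 2 / √|l| := by
  rcases le_total 0 t with ht | ht
  · exact norm_chirpPrim_zero_le_of_nonneg hl ht
  · have h : chirpPrim l 0 t = -chirpPrim l 0 (-t) := by
      have := intervalIntegral.integral_comp_neg (a := 0) (b := t) (chirp l 0)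
      rw [neg_zero] at this
      rw [chirpPrim, chirpPrim, ← intervalIntegral.integral_symm, ← this]
      refine intervalIntegral.integral_congr fun u _ => ?_
      simp [chirp]
    rw [h, norm_neg]
    exact norm_chirpPrim_zero_le_of_nonneg hl (by linarith)

/-- The bound for Fresnel integrals, uniform in the linear term: completing the square reduces it
to `norm_chirpPrim_zero_le`. -/
lemma norm_chirpPrim_le {l : ℝ} (hl : l ≠ 0) (m t : ℝ) :
    ‖chirpPrim l m t‖ ≤ 4 / √|l| := by
  set h := m / (2 * l) with hh
  have hlC : (l : ℂ) ≠ 0 := by exact_mod_cast hl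
  have key : chirpPrim l m t = Complex.exp (2 * Real.pi * Complex.I * (-(l * h ^ 2)))
      * (chirpPrim l 0 (t + h) - chirpPrim l 0 h) := by
    have hi := fun p q => (continuous_chirp l 0).intervalIntegrable (μ := volume) p q
    have h1 := intervalIntegral.integral_comp_add_right (a := 0) (b := t) (chirp l 0) h
    rw [chirpPrim, chirpPrim, chirpPrim,
      intervalIntegral.integral_interval_sub_left (hi _ _) (hi _ _)]
    rw [zero_add] at h1
    rw [← h1, ← intervalIntegral.integral_const_mul]
    refine intervalIntegral.integral_congr fun u _ => ?_
    simp only [chirp]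
    rw [← Complex.exp_add]
    congr 1
    rw [hh]
    push_cast
    field_simp
    ring
  have hn : ‖Complex.exp (2 * Real.pi * Complex.I * (-(l * h ^ 2)))‖ = 1 := by
    have := norm_chirp (-l) 0 h
    rw [chirp] at this
    rw [← this]
    congr 3
    push_cast
    ring
  rw [key, norm_mul, hn, one_mul]
  calc _ ≤ 2 / √|l| + 2 / √|l| :=
        (norm_sub_le _ _).trans
          (add_le_add (norm_chirpPrim_zero_le hl _) (norm_chirpPrim_zero_le hl _))
    _ = _ := by ring

lemma integral_mul_chirp {ψ ψ' : ℝ → ℂ} (hd : ∀ x, HasDerivAt ψ (ψ' x) x)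
    (hc : Continuous ψ') (hs : HasCompactSupport ψ) (l m : ℝ) :
    ∫ x, ψ x * chirp l m x = -∫ x, ψ' x * chirpPrim l m x := by
  have hψ : Continuous ψ := continuous_iff_continuousAt.2 fun x => (hd x).continuousAt
  have hs' : HasCompactSupport ψ' := by
    have : deriv ψ = ψ' := funext fun x => (hd x).deriv
    exact this ▸ hs.deriv
  exact integral_mul_deriv_eq_deriv_mul_of_integrable (fun x _ => hd x)
    (fun x _ => hasDerivAt_chirpPrim l m x)
    ((hψ.mul (continuous_chirp l m)).integrable_of_hasCompactSupport hs.mul_right)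
    ((hc.mul (continuous_chirpPrim l m)).integrable_of_hasCompactSupport hs'.mul_right)
    ((hψ.mul (continuous_chirpPrim l m)).integrable_of_hasCompactSupport hs.mul_right)

lemma norm_integral_le_of_support {f : ℝ → ℂ} {R C : ℝ} (hR : 0 ≤ R)
    (h0 : ∀ x, R < |x| → f x = 0) (hC : ∀ x, ‖f x‖ ≤ C) : ‖∫ x, f x‖ ≤ C * (2 * R) := by
  have hsub : ∫ x in Set.Icc (-R) R, f x = ∫ x, f x := by
    refine setIntegral_eq_integral_of_forall_compl_eq_zero fun x hx => h0 x ?_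
    by_contra! h
    exact hx (abs_le.1 h)
  rw [← hsub]
  refine (norm_setIntegral_le_of_norm_le_const (by simp) fun x _ => hC x).trans_eq ?_
  rw [Measure.real, Real.volume_Icc, ENNReal.toReal_ofReal (by linarith)]
  ring

/-- Two integrations by parts for the sheared amplitude `φ (x, y - s x)` with diagonal phase. The
constant does not depend on the slope `s ∈ [-1, 1]`. -/
lemma exists_bound_sheared (φ : ℝ × ℝ → ℂ) (hφ : ContDiff ℝ (⊤ : ℕ∞) φ)
    (hφc : HasCompactSupport φ) :
    ∃ C : ℝ, 0 ≤ C ∧ ∀ s l m k n : ℝ, |s| ≤ 1 → l ≠ 0 → k ≠ 0 →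
      ‖∫ x : ℝ, (∫ y : ℝ, φ (x, y - s * x) * chirp k n y) * chirp l m x‖
        ≤ C * (1 / √|l| * (1 / √|k|)) := by
  -- `P = ∂φ/∂y`
  set P : ℝ × ℝ → ℂ := fun z => fderiv ℝ φ z (0, 1) with hP
  have hPs : ContDiff ℝ (⊤ : ℕ∞) P :=
    (hφ.fderiv_right (m := (⊤ : ℕ∞)) (by simp)).clm_apply contDiff_const
  have hPc : HasCompactSupport P := hφc.fderiv_apply ℝ (0, 1)
  have hQcont : Continuous (fderiv ℝ P) := hPs.continuous_fderiv (by simp)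
  obtain ⟨M, hM⟩ := (hPc.fderiv ℝ).exists_bound_of_continuous hQcont
  have hM0 : 0 ≤ M := (norm_nonneg _).trans (hM 0)
  -- a common radius containing all supports
  obtain ⟨R, hR0, hR⟩ : ∃ R : ℝ, 0 ≤ R ∧ tsupport φ ⊆ Metric.closedBall 0 R := by
    obtain ⟨R, hR⟩ := hφc.isBounded.subset_closedBall (0 : ℝ × ℝ)
    exact ⟨max R 0, le_max_right _ _,
      hR.trans (Metric.closedBall_subset_closedBall (le_max_left _ _))⟩
  have hφ0 : ∀ z : ℝ × ℝ, R < ‖z‖ → φ z = 0 := by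
    intro z hz
    refine image_eq_zero_of_notMem_tsupport fun h => ?_
    have := hR h
    rw [mem_closedBall_zero_iff] at this
    linarith
  have hPsub : tsupport P ⊆ tsupport φ := tsupport_fderiv_apply_subset ℝ (0, 1)
  have hP0 : ∀ z : ℝ × ℝ, R < ‖z‖ → P z = 0 := by
    intro z hz
    refine image_eq_zero_of_notMem_tsupport fun h => ?_
    have := hR (hPsub h)
    rw [mem_closedBall_zero_iff] at this
    linarith
  have hQ0 : ∀ z : ℝ × ℝ, R < ‖z‖ → fderiv ℝ P z = 0 := by
    intro z hz
    refine image_eq_zero_of_notMem_tsupport fun h => ?_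
    have := hR (hPsub (tsupport_fderiv_subset ℝ h))
    rw [mem_closedBall_zero_iff] at this
    linarith
  refine ⟨4 * M * (2 * R) * 4 * (2 * (2 * R)), by positivity, ?_⟩
  intro s l m k n hs hl hk
  -- outside these ranges the sheared point leaves the support
  have hx : ∀ x y : ℝ, R < |x| → R < ‖((x, y - s * x) : ℝ × ℝ)‖ := fun x y h =>
    h.trans_le (norm_fst_le ((x, y - s * x) : ℝ × ℝ))
  have hy : ∀ x y : ℝ, 2 * R < |y| → R < ‖((x, y - s * x) : ℝ × ℝ)‖ := by
    intro x y h
    by_contra! hle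
    have h1 : |x| ≤ R := (norm_fst_le ((x, y - s * x) : ℝ × ℝ)).trans hle
    have h2 : |y - s * x| ≤ R := (norm_snd_le ((x, y - s * x) : ℝ × ℝ)).trans hle
    have h3 : |s * x| ≤ R := by
      rw [abs_mul]
      nlinarith [abs_nonneg x, abs_nonneg s]
    have h4 : |y| ≤ |y - s * x| + |s * x| := by
      simpa using abs_add_le (y - s * x) (s * x)
    linarith
  -- integration by parts in `y`
  have hstep1 : ∀ x : ℝ, ∫ y : ℝ, φ (x, y - s * x) * chirp k n y
      = -∫ y : ℝ, P (x, y - s * x) * chirpPrim k n y := by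
    intro x
    refine integral_mul_chirp (fun y => ?_) ?_ ?_ k n
    · have h1 : HasDerivAt (fun y : ℝ => ((x, y - s * x) : ℝ × ℝ)) (0, 1) y :=
        (hasDerivAt_const y x).prodMk ((hasDerivAt_id y).sub_const (s * x))
      exact ((hφ.differentiable (by simp)) _).hasFDerivAt.comp_hasDerivAt y h1
    · exact hPs.continuous.comp (by fun_prop)
    · refine HasCompactSupport.intro (isCompact_closedBall (0 : ℝ) (2 * R)) fun y hyR => ?_
      rw [mem_closedBall_zero_iff, Real.norm_eq_abs, not_le] at hyR
      exact hφ0 _ (hy x y hyR)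
  -- integration by parts in `x`
  have hstep2 : ∀ y : ℝ, ∫ x : ℝ, P (x, y - s * x) * chirp l m x
      = -∫ x : ℝ, fderiv ℝ P (x, y - s * x) (1, -s) * chirpPrim l m x := by
    intro y
    refine integral_mul_chirp (fun x => ?_) ?_ ?_ l m
    · have h1 : HasDerivAt (fun x : ℝ => ((x, y - s * x) : ℝ × ℝ)) (1, -s) x := by
        refine (hasDerivAt_id x).prodMk ?_
        simpa using ((hasDerivAt_id x).const_mul s).const_sub y
      exact ((hPs.differentiable (by simp)) _).hasFDerivAt.comp_hasDerivAt x h1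
    · exact (hQcont.comp (by fun_prop)).clm_apply continuous_const
    · refine HasCompactSupport.intro (isCompact_closedBall (0 : ℝ) R) fun x hxR => ?_
      rw [mem_closedBall_zero_iff, Real.norm_eq_abs, not_le] at hxR
      exact hP0 _ (hx x y hxR)
  have hinner : ∀ y : ℝ, ‖∫ x : ℝ, P (x, y - s * x) * chirp l m x‖
      ≤ M * (4 / √|l|) * (2 * R) := by
    intro y
    rw [hstep2 y, norm_neg]
    refine norm_integral_le_of_support hR0 (fun x h => ?_) fun x => ?_
    · simp [hQ0 _ (hx x y h)]
    · rw [norm_mul]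
      refine mul_le_mul ?_ (norm_chirpPrim_le hl m x) (norm_nonneg _) hM0
      have hv : ‖((1, -s) : ℝ × ℝ)‖ ≤ 1 := by
        simpa [Prod.norm_def] using hs
      calc _ ≤ ‖fderiv ℝ P (x, y - s * x)‖ * ‖((1, -s) : ℝ × ℝ)‖ :=
            ContinuousLinearMap.le_opNorm _ _
        _ ≤ M * 1 := mul_le_mul (hM _) hv (norm_nonneg _) hM0
        _ = M := mul_one M
  have hswap : ∫ x : ℝ, (∫ y : ℝ, φ (x, y - s * x) * chirp k n y) * chirp l m x
      = -∫ y : ℝ, (∫ x : ℝ, P (x, y - s * x) * chirp l m x) * chirpPrim k n y := by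
    have hint : Integrable (Function.uncurry fun x y : ℝ =>
        P (x, y - s * x) * chirp l m x * chirpPrim k n y) (volume.prod volume) := by
      refine Continuous.integrable_of_hasCompactSupport ?_ ?_
      · have h1 := hPs.continuous
        have h2 := continuous_chirp l m
        have h3 := continuous_chirpPrim k n
        simp only [Function.uncurry_def]
        fun_prop
      · refine HasCompactSupport.intro (isCompact_closedBall (0 : ℝ × ℝ) (2 * R)) ?_
        rintro ⟨x, y⟩ hxy
        rw [mem_closedBall_zero_iff, not_le, Prod.norm_def, lt_max_iff] at hxy
        have : R < ‖((x, y - s * x) : ℝ × ℝ)‖ := by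
          rcases hxy with h | h
          · simp only [Real.norm_eq_abs] at h
            exact hx x y (by linarith)
          · exact hy x y h
        simp [Function.uncurry, hP0 _ this]
    simp only [hstep1, neg_mul, ← integral_mul_const]
    rw [integral_neg, ← integral_integral_swap hint]
    congr 1
    refine integral_congr_ae (Filter.Eventually.of_forall fun x => ?_)
    refine integral_congr_ae (Filter.Eventually.of_forall fun y => ?_)
    simp only
    ring
  rw [hswap, norm_neg]
  have hfin : ‖∫ y : ℝ, (∫ x : ℝ, P (x, y - s * x) * chirp l m x) * chirpPrim k n y‖
      ≤ (M * (4 / √|l|) * (2 * R)) * (4 / √|k|) * (2 * (2 * R)) := by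
    refine norm_integral_le_of_support (by linarith) (fun y h => ?_) fun y => ?_
    · have : ∀ x : ℝ, P (x, y - s * x) = 0 := fun x => hP0 _ (hy x y h)
      simp [this]
    · rw [norm_mul]
      exact mul_le_mul (hinner y) (norm_chirpPrim_le hk n y) (norm_nonneg _) (by positivity)
  refine hfin.trans_eq ?_
  ring

/-- The estimate when `|a| ≤ |c'|`, where the slope `b / (2c')` that diagonalises the form is at
most `1` in absolute value. -/
lemma exists_bound_of_abs_le (φ : ℝ × ℝ → ℂ) (hφ : ContDiff ℝ (⊤ : ℕ∞) φ)
    (hφc : HasCompactSupport φ) :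
    ∃ C : ℝ, 0 ≤ C ∧ ∀ (a b c' d e g D : ℝ), 0 < D → b ^ 2 - 4 * a * c' = -D → |a| ≤ |c'| →
      ‖∫ x : ℝ, ∫ y : ℝ, φ (x, y) * Complex.exp (2 * Real.pi * Complex.I *
          (a * x ^ 2 + b * x * y + c' * y ^ 2 + d * x + e * y + g))‖
        ≤ C / Real.sqrt D := by
  obtain ⟨C, hC0, hC⟩ := exists_bound_sheared φ hφ hφc
  refine ⟨2 * C, by positivity, ?_⟩
  intro a b c' d e g D hD hdisc hac
  have hc0 : c' ≠ 0 := by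
    rintro rfl
    nlinarith [sq_nonneg b]
  have hcC : (c' : ℂ) ≠ 0 := by exact_mod_cast hc0
  set s := b / (2 * c') with hsdef
  set A := D / (4 * c') with hA
  have hA0 : A ≠ 0 := by positivity
  have hs : |s| ≤ 1 := by
    have h1 : a * c' ≤ c' ^ 2 := by
      calc a * c' ≤ |a * c'| := le_abs_self _
        _ = |a| * |c'| := abs_mul _ _
        _ ≤ |c'| * |c'| := by gcongr
        _ = c' ^ 2 := by rw [abs_mul_abs_self]; ring
    rw [hsdef, abs_div]
    refine div_le_one_of_le₀ (sq_le_sq.1 ?_) (abs_nonneg _)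
    nlinarith
  have hDC : (D : ℂ) = 4 * a * c' - b ^ 2 := by
    have : D = 4 * a * c' - b ^ 2 := by linarith
    rw [this]; push_cast; ring
  have hpt : ∀ x y : ℝ, Complex.exp (2 * Real.pi * Complex.I *
      (a * x ^ 2 + b * x * ((y - s * x : ℝ) : ℂ) + c' * ((y - s * x : ℝ) : ℂ) ^ 2 + d * x
        + e * ((y - s * x : ℝ) : ℂ) + g))
      = chirp c' e y * chirp A (d - e * s) x * Complex.exp (2 * Real.pi * Complex.I * g) := by
    intro x y
    rw [chirp, chirp, ← Complex.exp_add, ← Complex.exp_add]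
    congr 1
    rw [hA, hsdef]
    push_cast
    rw [hDC]
    field_simp
    ring
  have hg : ‖Complex.exp (2 * Real.pi * Complex.I * g)‖ = 1 := by
    have := norm_chirp 0 g 1
    simpa [chirp] using this
  have heq : ∫ x : ℝ, ∫ y : ℝ, φ (x, y) * Complex.exp (2 * Real.pi * Complex.I *
        (a * x ^ 2 + b * x * y + c' * y ^ 2 + d * x + e * y + g))
      = (∫ x : ℝ, (∫ y : ℝ, φ (x, y - s * x) * chirp c' e y) * chirp A (d - e * s) x)
        * Complex.exp (2 * Real.pi * Complex.I * g) := by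
    rw [← integral_mul_const]
    refine integral_congr_ae (Filter.Eventually.of_forall fun x => ?_)
    simp only
    rw [← integral_sub_right_eq_self _ (s * x), ← integral_mul_const, ← integral_mul_const]
    refine integral_congr_ae (Filter.Eventually.of_forall fun y => ?_)
    simp only [hpt]
    ring
  rw [heq, norm_mul, hg, mul_one]
  refine (hC s A (d - e * s) c' e hs hA0 hc0).trans_eq ?_
  have hprod : √|A| * √|c'| = √D / 2 := by
    rw [← Real.sqrt_mul (abs_nonneg _), ← abs_mul]
    have : A * c' = D / 2 ^ 2 := by
      rw [hA]; field_simp; norm_num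
    rw [this, abs_of_pos (by positivity), Real.sqrt_div hD.le, Real.sqrt_sq (by norm_num)]
  have hD' : √D ≠ 0 := (Real.sqrt_pos.2 hD).ne'
  rw [one_div_mul_one_div, hprod]
  field_simp

/-- Stationary phase for quadratic phases: for smooth compactly supported `φ : ℝ² → ℂ`
there is `c = c(φ) > 0` such that for every real quadratic polynomial
`f(x,y) = ax² + bxy + cy² + dx + ey + g` with `b² − 4ac = −D`, `D > 0`, one has
`|∫∫ φ(x,y) e(f(x,y)) dx dy| ≤ c / √D`. -/
theorem stationary_phase_quadratic (φ : ℝ × ℝ → ℂ) (hφ : ContDiff ℝ (⊤ : ℕ∞) φ)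
    (hφc : HasCompactSupport φ) :
    ∃ c : ℝ, 0 < c ∧ ∀ (a b c' d e g D : ℝ), 0 < D → b ^ 2 - 4 * a * c' = -D →
      ‖∫ x : ℝ, ∫ y : ℝ, φ (x, y) * Complex.exp (2 * Real.pi * Complex.I *
          (a * x ^ 2 + b * x * y + c' * y ^ 2 + d * x + e * y + g))‖
        ≤ c / Real.sqrt D := by
  obtain ⟨C₁, hC₁, h₁⟩ := exists_bound_of_abs_le φ hφ hφc
  obtain ⟨C₂, hC₂, h₂⟩ := exists_bound_of_abs_le (φ ∘ Prod.swap)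
    (hφ.comp (contDiff_snd.prodMk contDiff_fst))
    (hφc.comp_homeomorph (Homeomorph.prodComm ℝ ℝ))
  refine ⟨C₁ + C₂ + 1, by positivity, ?_⟩
  intro a b c' d e g D hD hdisc
  rcases le_total |a| |c'| with hac | hac
  · refine (h₁ a b c' d e g D hD hdisc hac).trans ?_
    gcongr
    linarith
  · -- exchange the two variables, and with them `a` with `c'` and `d` with `e`
    have hint : Integrable (Function.uncurry fun x y : ℝ =>
        φ (x, y) * Complex.exp (2 * Real.pi * Complex.I *
          (a * x ^ 2 + b * x * y + c' * y ^ 2 + d * x + e * y + g))) (volume.prod volume) := by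
      refine Continuous.integrable_of_hasCompactSupport ?_ (HasCompactSupport.mul_right hφc)
      have := hφ.continuous
      simp only [Function.uncurry_def]
      fun_prop
    rw [integral_integral_swap hint]
    have h := h₂ c' b a e d g D hD (by linarith) hac
    have hle : C₂ / √D ≤ (C₁ + C₂ + 1) / √D := by
      gcongr
      linarith
    refine le_trans (le_of_eq ?_) (h.trans hle)
    congr 1
    refine integral_congr_ae (Filter.Eventually.of_forall fun y => ?_)
    refine integral_congr_ae (Filter.Eventually.of_forall fun x => ?_)
    simp only [Function.comp, Prod.swap]
    congr 2
    ring
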